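/- arXiv:2312.01359 — 6 statements merged into one kernel-verified Lean document; each statement's English description precedes it below -/
import Mathlib

section
/- Let T be a string of length n ≥ 2 over an alphabet Σ whose last character occurs exactly once in T. Then every suffixient set S for T is a string attractor for T. -/
/-- The 1-based (inclusive) substring `T[i..j]` of a string `T`. -/
def Substr {A : Type*} (T : List A) (i j : ℕ) : List A := (T.take j).drop (i - 1)

/-- A string `w` (possibly empty) is right-maximal in `T` if there are two distinct
characters `c ≠ c'` such that both `w·c` and `w·c'` occur (as substrings) in `T`. -/
def RightMaximal {A : Type*} (T w : List A) : Prop :=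
  ∃ c c' : A, c ≠ c' ∧ (w ++ [c]) <:+: T ∧ (w ++ [c']) <:+: T

/-- `S ⊆ {1,…,n}` is suffixient for `T` if for every right-maximal string `w` in `T`
and every character `c` such that `w·c` occurs in `T`, there is `s ∈ S` such that
`w·c` is a suffix of `T[1..s]`. -/
def IsSuffixient {A : Type*} (T : List A) (S : Finset ℕ) : Prop :=
  (∀ s ∈ S, 1 ≤ s ∧ s ≤ T.length) ∧
  ∀ (w : List A) (c : A), RightMaximal T w → (w ++ [c]) <:+: T →
    ∃ s ∈ S, (w ++ [c]) <:+ T.take s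

/-- `Γ ⊆ {1,…,n}` is a string attractor for `T` if every substring `T[i..j]` has an
occurrence `T[i'..j']` crossing a position of `Γ`. -/
def IsAttractor {A : Type*} (T : List A) (Γ : Finset ℕ) : Prop :=
  (∀ s ∈ Γ, 1 ≤ s ∧ s ≤ T.length) ∧
  ∀ i j, 1 ≤ i → i ≤ j → j ≤ T.length →
    ∃ i' j', 1 ≤ i' ∧ i' ≤ j' ∧ j' ≤ T.length ∧
      Substr T i' j' = Substr T i j ∧ ∃ s ∈ Γ, i' ≤ s ∧ s ≤ j'

theorem suffixient_aux {A : Type*} (u : List A) (e : A) (he : e ∉ u) (hu : u ≠ [])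
    (S : Finset ℕ) (hS : IsSuffixient (u ++ [e]) S) (w : List A) :
    w ≠ [] → w <:+: (u ++ [e]) → ∃ x y, x ++ w ++ y = u ++ [e] ∧
      ∃ s ∈ S, x.length < s ∧ s ≤ x.length + w.length := by
  induction w using List.reverseRecOn with
  | nil => intro h; exact absurd rfl h
  | append_singleton v c ih =>
    intro _ hinf
    by_cases hR : RightMaximal (u ++ [e]) v
    · obtain ⟨s, hs, x, hx⟩ := hS.2 v c hR hinf
      have hsl := hS.1 s hs
      refine ⟨x, (u ++ [e]).drop s, ?_, s, hs, ?_⟩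
      · rw [hx, List.take_append_drop]
      · have h := congrArg List.length hx
        rw [List.length_take, Nat.min_eq_left hsl.2] at h
        simp only [List.length_append, List.length_singleton] at h ⊢
        omega
    · have hv : v ≠ [] := by
        rintro rfl
        apply hR
        obtain ⟨a, t, rfl⟩ := List.exists_cons_of_ne_nil hu
        refine ⟨a, e, ?_, ⟨[], t ++ [e], by simp⟩, ⟨a :: t, [], by simp⟩⟩
        rintro rfl
        simp at he
      have hvinf : v <:+: (u ++ [e]) := (List.prefix_append v [c]).isInfix.trans hinf
      obtain ⟨x, y, hxy, s, hs, h1, h2⟩ := ih hv hvinf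
      cases y with
      | nil =>
        exfalso
        obtain ⟨v', d, rfl⟩ : ∃ v' d, v = v' ++ [d] :=
          ⟨_, _, (List.dropLast_append_getLast hv).symm⟩
        have hd : d = e := by
          have h : (x ++ v') ++ [d] = u ++ [e] := by simpa using hxy
          have := (List.append_inj' h rfl).2
          simpa using this
        subst hd
        obtain ⟨x', y', h⟩ := hinf
        apply he
        have h' : (x' ++ v' ++ [d]) ++ (c :: y') = u ++ [d] := by simpa using h
        have h3 := congrArg List.dropLast h'
        rw [List.dropLast_append_of_ne_nil (by simp), List.dropLast_concat] at h3
        rw [← h3]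
        simp
      | cons d y =>
        have hd : d = c := by
          by_contra hne
          exact hR ⟨d, c, hne, ⟨x, y, by simpa using hxy⟩, hinf⟩
        subst hd
        refine ⟨x, y, by simpa using hxy, s, hs, h1, ?_⟩
        simp only [List.length_append, List.length_singleton]
        omega

/-- Every suffixient set for `T` is a string attractor for `T`. -/
theorem suffixient_is_attractor {A : Type*} [DecidableEq A] (T : List A)
    (hne : T ≠ []) (hn : 2 ≤ T.length)
    (hlast : T.count (T.getLast hne) = 1)
    (S : Finset ℕ) (hS : IsSuffixient T S) :
    IsAttractor T S := by
  refine ⟨hS.1, fun i j hi hij hj => ?_⟩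
  obtain ⟨u, e, rfl⟩ : ∃ u e, T = u ++ [e] :=
    ⟨_, _, (List.dropLast_append_getLast hne).symm⟩
  have he : e ∉ u := by
    simpa [List.count_append, List.count_eq_zero] using hlast
  have hu : u ≠ [] := by
    rintro rfl
    simp at hn
  have hlen : (Substr (u ++ [e]) i j).length = j - (i - 1) := by
    rw [Substr, List.length_drop, List.length_take, Nat.min_eq_left hj]
  have hw : Substr (u ++ [e]) i j ≠ [] := by
    intro h
    rw [h] at hlen
    simp at hlen
    omega
  have hinf : Substr (u ++ [e]) i j <:+: (u ++ [e]) :=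
    (List.drop_suffix _ _).isInfix.trans (List.take_prefix _ _).isInfix
  obtain ⟨x, y, hxy, s, hs, h1, h2⟩ := suffixient_aux u e he hu S hS _ hw hinf
  generalize Substr (u ++ [e]) i j = w at *
  generalize u ++ [e] = T at *
  subst hxy
  refine ⟨x.length + 1, x.length + w.length, by omega, by omega, by simp, ?_, s, hs, h1, h2⟩
  rw [Substr, ← List.length_append, List.take_left]
  simp
end

section
/- Let T be a string of length n ≥ 2 over a linearly ordered alphabet Σ whose last character occurs exactly once in T, and let B = BWT(reverse(T)) with r̄ runs. Then the set S = { pos(j) : 1 ≤ j ≤ n and j is the first or the last position of some run of B } is a suffixient set for T, and |S| ≤ 2·r̄. -/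
/-- The rotation start offsets `0, …, n−1` of `W`, sorted so that the corresponding
cyclic rotations of `W` are in (non-decreasing, hence for distinct rotations increasing)
lexicographic order.  The `j`-th (1-based) lexicographically smallest rotation of `W`
is `W.rotate ((sortedRotIdx W).getD (j-1) 0)`. -/
def sortedRotIdx {A : Type*} [LinearOrder A] (W : List A) : List ℕ :=
  List.insertionSort (fun a b => W.rotate a ≤ W.rotate b) (List.range W.length)

/-- The Burrows–Wheeler transform of `W`: the `j`-th entry is the last character of the
`j`-th lexicographically smallest cyclic rotation of `W` (as an `Option`, which is
always `some` when `W` is nonempty). -/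
def BWT {A : Type*} [LinearOrder A] (W : List A) : List (Option A) :=
  (sortedRotIdx W).map (fun k => (W.rotate k).getLast?)

/-- The number of runs (maximal blocks of consecutive equal characters) of a string. -/
def runsCount {B : Type*} [DecidableEq B] (L : List B) : ℕ :=
  (L.destutter (· ≠ ·)).length

/-- `j` (1-based) is the first or the last position of some run of `L`. -/
def IsRunBoundary {B : Type*} (L : List B) (j : ℕ) : Prop :=
  1 ≤ j ∧ j ≤ L.length ∧
    (j = 1 ∨ L[j-2]? ≠ L[j-1]? ∨ j = L.length ∨ L[j-1]? ≠ L[j]?)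

instance {B : Type*} [DecidableEq B] (L : List B) : DecidablePred (IsRunBoundary L) :=
  fun j => by unfold IsRunBoundary; infer_instance

/-- If the `j`-th (1-based) lexicographically smallest rotation of `W = reverse T`
starts at (1-based) index `i` of `W`, then `pos(j) = 1` if `i = 1` and
`pos(j) = n − i + 2` otherwise; with this definition `T[pos(j)]` is the `j`-th
character of `BWT W`. -/
def posOf {A : Type*} [LinearOrder A] (W : List A) (j : ℕ) : ℕ :=
  if (sortedRotIdx W).getD (j-1) 0 = 0 then 1
  else W.length - (sortedRotIdx W).getD (j-1) 0 + 1

theorem cons_le_iff' {A : Type*} [LinearOrder A] (a b : A) (x y : List A) :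
    a :: x ≤ b :: y ↔ a < b ∨ a = b ∧ x ≤ y := by
  rw [le_iff_lt_or_eq, le_iff_lt_or_eq, List.cons_lt_cons_iff, List.cons.injEq]
  tauto

theorem prefix_convex {A : Type*} [LinearOrder A] (u : List A) :
    ∀ x y z : List A, u <+: x → u <+: z → x ≤ y → y ≤ z → u <+: y := by
  induction u with
  | nil => intros; exact List.nil_prefix
  | cons a u ih =>
    intro x y z hx hz hxy hyz
    obtain ⟨x', rfl⟩ := hx
    obtain ⟨z', rfl⟩ := hz
    cases y with
    | nil => exact absurd hxy (not_le_of_gt (List.nil_lt_cons _ _))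
    | cons b y =>
      simp only [List.cons_append, cons_le_iff'] at hxy hyz
      rcases hxy with h | ⟨rfl, h⟩
      · rcases hyz with h' | ⟨rfl, h'⟩
        · exact absurd h (lt_asymm h')
        · exact absurd h (lt_irrefl _)
      · rcases hyz with h' | ⟨_, h'⟩
        · exact absurd h' (lt_irrefl _)
        · rw [List.cons_prefix_cons]
          exact ⟨rfl, ih _ _ _ (List.prefix_append _ _) (List.prefix_append _ _) h h'⟩

theorem change_up {X : Type*} (f : ℕ → X) (c : X) (d : ℕ) : ∀ i, f i = c → f (i + d) ≠ c →
    ∃ j, i ≤ j ∧ j ≤ i + d ∧ f j = c ∧ f j ≠ f (j+1) := by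
  induction d with
  | zero => intro i h h'; exact absurd h h'
  | succ d ih =>
    intro i h h'
    by_cases h1 : f (i+1) = c
    · obtain ⟨j, a, b, e⟩ := ih (i+1) h1 (by rwa [show i + 1 + d = i + (d+1) by omega])
      exact ⟨j, by omega, by omega, e⟩
    · exact ⟨i, by omega, by omega, h, fun e => h1 (e ▸ h)⟩

theorem change_down {X : Type*} (f : ℕ → X) (c : X) (d : ℕ) : ∀ i, f i ≠ c → f (i + d) = c →
    ∃ j, i ≤ j ∧ j + 1 ≤ i + d ∧ f (j+1) = c ∧ f j ≠ f (j+1) := by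
  induction d with
  | zero => intro i h h'; exact absurd h' h
  | succ d ih =>
    intro i h h'
    by_cases h1 : f (i+1) = c
    · exact ⟨i, by omega, by omega, h1, fun e => h (e ▸ h1)⟩
    · obtain ⟨j, a, b, e⟩ := ih (i+1) h1 (by rwa [show i + 1 + d = i + (d+1) by omega])
      exact ⟨j, by omega, by omega, e⟩

theorem runs_eq {B : Type*} [DecidableEq B] (l : List B) : ∀ a : B,
    (l.destutter' (· ≠ ·) a).length =
      1 + ∑ i ∈ Finset.range l.length, if (a::l)[i]? ≠ (a::l)[i+1]? then 1 else 0 := by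
  induction l with
  | nil => intro a; simp
  | cons b l ih =>
    intro a
    rw [List.length_cons, Finset.sum_range_succ', List.destutter'_cons]
    by_cases h : a = b
    · subst h
      simpa using ih a
    · have := ih b
      simp only [List.getElem?_cons_succ] at this ⊢
      simp [h, this]
      omega

theorem card_boundary {B : Type*} [DecidableEq B] (L : List B) (n : ℕ) (hn : L.length = n) :
    ((Finset.Icc 1 n).filter (IsRunBoundary L)).card ≤ 2 * runsCount L := by
  subst hn
  cases L with
  | nil => simp
  | cons a l =>
    have hr : runsCount (a::l) = _ := runs_eq l a
    rw [hr, ← Finset.card_filter]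
    set D := (Finset.range l.length).filter (fun i => (a::l)[i]? ≠ (a::l)[i+1]?) with hD
    have : (Finset.Icc 1 (a::l).length).filter (IsRunBoundary (a::l)) ⊆
        (({1} : Finset ℕ) ∪ {(a::l).length}) ∪ (D.image (· + 1) ∪ D.image (· + 2)) := by
      intro j hj
      simp only [Finset.mem_filter, Finset.mem_Icc, IsRunBoundary] at hj
      obtain ⟨⟨h1, h2⟩, -, -, h⟩ := hj
      simp only [Finset.mem_union, Finset.mem_singleton, Finset.mem_image, hD, Finset.mem_filter,
        Finset.mem_range]
      by_cases e1 : j = 1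
      · simp [e1]
      by_cases e2 : j = (a::l).length
      · simp [e2]
      simp only [List.length_cons] at h2 e2
      rcases h with h | h | h | h
      · exact absurd h e1
      · right; right
        exact ⟨j-2, ⟨by omega, by rwa [show j - 2 + 1 = j - 1 by omega]⟩, by omega⟩
      · exact absurd h e2
      · right; left
        exact ⟨j-1, ⟨by omega, by rwa [show j - 1 + 1 = j by omega]⟩, by omega⟩
    have h1 := Finset.card_le_card this
    have h2 := Finset.card_union_le (({1} : Finset ℕ) ∪ {(a::l).length}) (D.image (· + 1) ∪ D.image (· + 2))
    have h3 := Finset.card_union_le ({1} : Finset ℕ) {(a::l).length}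
    have h4 := Finset.card_union_le (D.image (· + 1)) (D.image (· + 2))
    have h5 : (D.image (· + 1)).card ≤ D.card := Finset.card_image_le
    have h6 : (D.image (· + 2)).card ≤ D.card := Finset.card_image_le
    simp only [Finset.card_singleton] at h3
    omega

theorem idx_perm {A : Type*} [LinearOrder A] (W : List A) :
    (sortedRotIdx W).Perm (List.range W.length) := List.perm_insertionSort _ _

theorem idx_length {A : Type*} [LinearOrder A] (W : List A) :
    (sortedRotIdx W).length = W.length := by simpa using (idx_perm W).length_eq

theorem idx_sorted {A : Type*} [LinearOrder A] (W : List A) :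
    (sortedRotIdx W).Pairwise (fun a b => W.rotate a ≤ W.rotate b) := by
  haveI : Std.Total (fun a b => W.rotate a ≤ W.rotate b) := ⟨fun a b => le_total _ _⟩
  haveI : IsTrans ℕ (fun a b => W.rotate a ≤ W.rotate b) := ⟨fun a b c => le_trans⟩
  exact List.pairwise_insertionSort _ _

theorem idx_mono {A : Type*} [LinearOrder A] (W : List A) (i j : ℕ) (hij : i ≤ j)
    (hj : j < (sortedRotIdx W).length) :
    W.rotate ((sortedRotIdx W)[i]) ≤ W.rotate ((sortedRotIdx W)[j]) := by
  rcases hij.eq_or_lt with rfl | h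
  · exact le_refl _
  · exact List.pairwise_iff_getElem.1 (idx_sorted W) i j _ hj h

theorem BWT_length {A : Type*} [LinearOrder A] (W : List A) : (BWT W).length = W.length := by
  simp [BWT, idx_length]

/-- An occurrence of `c u` in `W` gives a rotation with prefix `u` and last character `c`. -/
theorem occ_rot {A : Type*} [LinearOrder A] (W u : List A) (c : A) (h : (c :: u) <:+: W) :
    ∃ i, ∃ hi : i < (sortedRotIdx W).length, u <+: W.rotate ((sortedRotIdx W)[i]) ∧
      (W.rotate ((sortedRotIdx W)[i])).getLast? = some c := by
  obtain ⟨s, t, rfl⟩ := h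
  set W := s ++ c :: u ++ t with hW
  suffices ∃ k < W.length, u <+: W.rotate k ∧ (W.rotate k).getLast? = some c by
    obtain ⟨k, hk, h⟩ := this
    have : k ∈ sortedRotIdx W := (idx_perm W).mem_iff.2 (List.mem_range.2 hk)
    obtain ⟨i, hi, rfl⟩ := List.mem_iff_getElem.1 this
    exact ⟨i, hi, h⟩
  have hpos : 0 < W.length := by simp [hW]
  refine ⟨(s.length + 1) % W.length, Nat.mod_lt _ hpos, ?_⟩
  rw [List.rotate_mod]
  have : W.rotate (s.length + 1) = (u ++ t) ++ (s ++ [c]) := by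
    have e : W = (s ++ [c]) ++ (u ++ t) := by simp [hW]
    rw [e, show s.length + 1 = (s ++ [c]).length by simp, List.rotate_append_length_eq]
  rw [this]
  constructor
  · simp
  · simp [List.getLast?_append]

/-- From a rotation back to an occurrence ending at the right position of `T`. -/
theorem rot_occ {A : Type*} [LinearOrder A] (d : A) (V u : List A) (c : A) (k : ℕ)
    (hd : d ∉ u) (hk : k < (d :: V).length)
    (hu : u <+: (d :: V).rotate k) (hc : ((d :: V).rotate k).getLast? = some c) :
    (u.reverse ++ [c]) <:+ (d :: V).reverse.take
      (if k = 0 then 1 else (d :: V).length - k + 1) := by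
  split_ifs with h0
  · subst h0
    have : u = [] := by
      cases u with
      | nil => rfl
      | cons a u =>
        simp [List.cons_prefix_cons] at hu
        simp [hu.1] at hd
    subst this
    simp only [List.rotate_zero] at hc
    obtain ⟨l, hl⟩ := List.getLast?_eq_some_iff.1 hc
    rw [hl]; simp
  · rw [List.rotate_eq_drop_append_take hk.le] at hu hc
    obtain ⟨m, rfl⟩ : ∃ m, k = m + 1 := ⟨k-1, by omega⟩
    simp only [List.length_cons] at hk
    rw [List.drop_succ_cons, List.take_succ_cons] at hu hc
    have hu' : u <+: V.drop m := by
      obtain ⟨t, ht⟩ := hu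
      rcases List.append_eq_append_iff.1 ht with ⟨r, h, hr⟩ | ⟨r, h, hr⟩
      · exact ⟨r, h.symm⟩
      · cases r with
        | nil => subst h; simp
        | cons a r =>
          simp only [List.cons_append, List.cons.injEq] at hr
          simp [h, hr.1] at hd
    have hc' : (d :: V)[m]? = some c := by
      rw [List.getLast?_append] at hc
      rw [← List.take_succ_cons, List.getLast?_take] at hc
      simp at hc
      rw [List.getElem?_eq_getElem (by simp; omega)] at hc ⊢
      have hm : ¬ V.length < m := by omega
      simpa [hm] using hc
    rw [← List.reverse_prefix]
    rw [List.take_reverse, List.reverse_reverse, List.reverse_append, List.reverse_reverse]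
    have e : (d::V).length - ((d::V).length - (m+1) + 1) = m := by simp; omega
    rw [e]
    obtain ⟨hm, hc''⟩ := List.getElem?_eq_some_iff.1 hc'
    rw [List.drop_eq_getElem_cons hm, hc'']
    simpa [List.cons_prefix_cons] using hu'

theorem exists_boundary {A : Type*} [LinearOrder A] (W u : List A) (c c' : A) (hcc : c ≠ c')
    (h : (c :: u) <:+: W) (h' : (c' :: u) <:+: W) :
    ∃ i, ∃ hi : i < (sortedRotIdx W).length, IsRunBoundary (BWT W) (i+1) ∧
      u <+: W.rotate ((sortedRotIdx W)[i]) ∧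
      (W.rotate ((sortedRotIdx W)[i])).getLast? = some c := by
  obtain ⟨i, hi, hiu, hic⟩ := occ_rot W u c h
  obtain ⟨i', hi', hiu', hic'⟩ := occ_rot W u c' h'
  have key : ∀ j (hj : j < (sortedRotIdx W).length), (BWT W)[j]? =
      some ((W.rotate ((sortedRotIdx W)[j])).getLast?) := by
    intro j hj
    simp [BWT, hj]
  have ki := key i hi
  have ki' := key i' hi'
  rw [hic] at ki
  rw [hic'] at ki'
  have kne : (BWT W)[i']? ≠ some (some c) := by
    rw [ki']; simpa using hcc.symm
  have hBl : (BWT W).length = (sortedRotIdx W).length := by simp [BWT]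
  rcases le_total i i' with hl | hl
  · obtain ⟨e, rfl⟩ := Nat.exists_eq_add_of_le hl
    obtain ⟨j, h1, h2, h3, h4⟩ := change_up (fun j => (BWT W)[j]?) _ e i ki kne
    have hj : j < (sortedRotIdx W).length := by omega
    refine ⟨j, hj, ⟨by omega, by omega, Or.inr (Or.inr (Or.inr h4))⟩, ?_, ?_⟩
    · exact prefix_convex u _ _ _ hiu hiu' (idx_mono W _ _ h1 hj) (idx_mono W _ _ h2 hi')
    · have := key j hj
      rw [h3] at this
      exact (Option.some.inj this).symm
  · obtain ⟨e, rfl⟩ := Nat.exists_eq_add_of_le hl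
    obtain ⟨j, h1, h2, h3, h4⟩ := change_down (fun j => (BWT W)[j]?) _ e i' kne ki
    have hj : j + 1 < (sortedRotIdx W).length := by omega
    refine ⟨j+1, hj, ⟨by omega, by omega, Or.inr (Or.inl h4)⟩, ?_, ?_⟩
    · exact prefix_convex u _ _ _ hiu' hiu (idx_mono W _ _ (by omega) hj) (idx_mono W _ _ h2 hi)
    · have := key _ hj
      rw [h3] at this
      exact (Option.some.inj this).symm

theorem rev_infix {A : Type*} {T w : List A} {c : A} (h : (w ++ [c]) <:+: T) :
    (c :: w.reverse) <:+: T.reverse := by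
  have := List.reverse_infix.2 h
  simpa using this

theorem bwt_run_boundaries_suffixient {A : Type*} [LinearOrder A] (T : List A)
    (hne : T ≠ []) (hn : 2 ≤ T.length)
    (hlast : T.count (T.getLast hne) = 1) :
    IsSuffixient T
      (((Finset.Icc 1 T.length).filter (IsRunBoundary (BWT T.reverse))).image
        (posOf T.reverse)) ∧
    (((Finset.Icc 1 T.length).filter (IsRunBoundary (BWT T.reverse))).image
        (posOf T.reverse)).card ≤ 2 * runsCount (BWT T.reverse) := by
  refine ⟨⟨?_, ?_⟩, ?_⟩
  · intro s hs
    simp only [Finset.mem_image, Finset.mem_filter, Finset.mem_Icc] at hs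
    obtain ⟨j, -, rfl⟩ := hs
    unfold posOf
    rw [List.length_reverse]
    split_ifs with h <;> omega
  · intro w c hw hc
    obtain ⟨c', hcc, hc'⟩ : ∃ c', c ≠ c' ∧ (w ++ [c']) <:+: T := by
      obtain ⟨a, b, hab, ha, hb⟩ := hw
      by_cases h : c = a
      · exact ⟨b, h ▸ hab, hb⟩
      · exact ⟨a, h, ha⟩
    obtain ⟨i, hi, hb, hu, hl⟩ :=
      exists_boundary T.reverse w.reverse c c' hcc (rev_infix hc) (rev_infix hc')
    have hi2 : i < T.length := by simpa [idx_length] using hi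
    refine ⟨posOf T.reverse (i+1), Finset.mem_image.2 ⟨i+1, Finset.mem_filter.2
      ⟨Finset.mem_Icc.2 ⟨by omega, by omega⟩, hb⟩, rfl⟩, ?_⟩
    have hT : T.reverse = T.getLast hne :: T.dropLast.reverse := by
      conv_lhs => rw [← List.dropLast_append_getLast hne]
      simp
    have hd : T.getLast hne ∉ w.reverse := by
      have hin := rev_infix hc
      rw [← List.count_reverse, hT] at hlast
      rw [hT] at hin
      have h0 : List.count (T.getLast hne) T.dropLast.reverse = 0 := by
        simpa using hlast
      have hnot := List.count_eq_zero.1 h0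
      have hsub : w.reverse <:+: T.dropLast.reverse := by
        rcases List.infix_cons_iff.1 hin with h | h
        · exact (List.cons_prefix_cons.1 h).2.isInfix
        · exact (List.suffix_cons c _).isInfix.trans h
      exact fun hm => hnot (hsub.subset hm)
    have hk : (sortedRotIdx T.reverse)[i] < T.reverse.length :=
      List.mem_range.1 ((idx_perm _).mem_iff.1 (List.getElem_mem hi))
    have hg : (sortedRotIdx T.reverse).getD i 0 = (sortedRotIdx T.reverse)[i] := by
      simp [hi]
    unfold posOf
    rw [Nat.add_sub_cancel, hg]
    generalize (sortedRotIdx T.reverse)[i] = k at hu hl hk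
    rw [hT] at hu hl hk
    have := rot_occ _ _ _ c k hd hk hu hl
    rw [← hT] at this
    simpa using this
  · exact Finset.card_image_le.trans (card_boundary _ _ (by simp [BWT_length]))
end

section
/- Let T be a string of length n ≥ 2 over a linearly ordered alphabet Σ whose last character occurs exactly once in T, and let r̄ be the number of runs of BWT(reverse(T)). Then there exists a suffixient set for T of cardinality at most 2·r̄; equivalently, χ ≤ 2·r̄ where χ is the minimum cardinality of a suffixient set for T. -/
theorem aux_runs {α B : Type*} [DecidableEq α] [DecidableEq B] (f : α → B) (l : List α) :
    ∀ a : α, ∃ S : Finset α,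
      S.card + 2 ≤ 2 * (List.destutter' (· ≠ ·) (f a) (l.map f)).length ∧
      (∀ x ∈ S, x ∈ a :: l) ∧
      ∀ x y, [x, y] <:+: a :: l → f x ≠ f y → x ∈ S ∧ y ∈ S := by
  induction l with
  | nil =>
    intro a
    refine ⟨∅, by simp, by simp, ?_⟩
    intro x y h
    have := h.length_le
    simp at this
  | cons b l ih =>
    intro a
    obtain ⟨S, h1, h2, h3⟩ := ih b
    by_cases hab : f a = f b
    · refine ⟨S, ?_, fun x hx => List.mem_cons_of_mem _ (h2 x hx), ?_⟩
      · rw [List.map_cons, List.destutter'_cons_neg _ (by simpa using hab), hab]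
        exact h1
      · intro x y h hxy
        rcases List.infix_cons_iff.1 h with h | h
        · simp only [List.cons_prefix_cons] at h
          obtain ⟨rfl, rfl, -⟩ := h
          exact absurd hab hxy
        · exact h3 x y h hxy
    · refine ⟨insert a (insert b S), ?_, ?_, ?_⟩
      · rw [List.map_cons, List.destutter'_cons_pos _ hab, List.length_cons]
        have e1 := Finset.card_insert_le a (insert b S)
        have e2 := Finset.card_insert_le b S
        omega
      · intro x hx
        simp only [Finset.mem_insert] at hx
        rcases hx with rfl | rfl | hx
        · simp
        · simp
        · exact List.mem_cons_of_mem _ (h2 x hx)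
      · intro x y h hxy
        rcases List.infix_cons_iff.1 h with h | h
        · simp only [List.cons_prefix_cons] at h
          obtain ⟨rfl, rfl, -⟩ := h
          simp
        · have := h3 x y h hxy
          simp [this.1, this.2]

theorem aux_cross {α : Type*} (R : α → α → Prop) (P g : α → Prop)
    (hP : ∀ x y z, R x y → R y z → P x → P z → P y) (hrefl : ∀ x, R x x) (l : List α) :
    l.Pairwise R → ∀ x ∈ l, ∀ z ∈ l, P x → P z → g x → ¬ g z →
      ∃ u v, P u ∧ P v ∧ ([u, v] <:+: l ∨ [v, u] <:+: l) ∧ g u ∧ ¬ g v := by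
  induction l with
  | nil => intro _ x hx; simp at hx
  | cons a l ih =>
    intro hs
    rw [List.pairwise_cons] at hs
    obtain ⟨ha, hs⟩ := hs
    have lift : (∃ u v, P u ∧ P v ∧ ([u, v] <:+: l ∨ [v, u] <:+: l) ∧ g u ∧ ¬ g v) →
        ∃ u v, P u ∧ P v ∧ ([u, v] <:+: a :: l ∨ [v, u] <:+: a :: l) ∧ g u ∧ ¬ g v := by
      rintro ⟨u, v, h1, h2, h3, h4⟩
      exact ⟨u, v, h1, h2, h3.imp List.infix_cons List.infix_cons, h4⟩
    have next : ∀ z ∈ l, P a → P z → ∃ b l', l = b :: l' ∧ P b := by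
      intro z hz pa pz
      cases l with
      | nil => simp at hz
      | cons b l' =>
        refine ⟨b, l', rfl, hP a b z (ha b (by simp)) ?_ pa pz⟩
        rcases List.mem_cons.1 hz with rfl | hz
        · exact hrefl _
        · exact (List.pairwise_cons.1 hs).1 z hz
    intro x hx z hz px pz gx gz
    rcases List.mem_cons.1 hx with rfl | hx' <;> rcases List.mem_cons.1 hz with rfl | hz'
    · exact absurd gx gz
    · obtain ⟨b, l', rfl, pb⟩ := next z hz' px pz
      by_cases gb : g b
      · exact lift (ih hs b (by simp) z hz' pb pz gb gz)
      · exact ⟨x, b, px, pb, Or.inl ⟨[], l', by simp⟩, gx, gb⟩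
    · obtain ⟨b, l', rfl, pb⟩ := next x hx' pz px
      by_cases gb : g b
      · exact ⟨b, z, pb, pz, Or.inr ⟨[], l', by simp⟩, gb, gz⟩
      · exact lift (ih hs x hx' b (by simp) px pb gx gb)
    · exact lift (ih hs x hx' z hz' px pz gx gz)

theorem aux_convex {A : Type*} [LinearOrder A] (v : List A) :
    ∀ x y z : List A, x ≤ y → y ≤ z → v <+: x → v <+: z → v <+: y := by
  induction v with
  | nil => intros; simp
  | cons a v ih =>
    rintro x y z hxy hyz ⟨x', rfl⟩ ⟨z', rfl⟩
    cases y with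
    | nil =>
      exact absurd hxy (by simp)
    | cons b y =>
      rw [List.cons_append, ← not_lt, List.cons_lt_cons_iff] at hxy hyz
      push Not at hxy hyz
      rw [List.cons_prefix_cons]
      have hab : a = b := le_antisymm hxy.1 hyz.1
      subst hab
      exact ⟨rfl, ih _ _ _ (hxy.2 rfl) (hyz.2 rfl)
        (List.prefix_append _ _) (List.prefix_append _ _)⟩

theorem aux_back {A : Type*} (T w : List A) (c : A) (h : (w ++ [c]) <:+: T) :
    ∃ k < T.length, w.reverse <+: T.reverse.rotate k ∧
      (T.reverse.rotate k).getLast? = some c := by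
  obtain ⟨p, q, rfl⟩ := h
  set T := p ++ (w ++ [c]) ++ q with hT
  have hpos : 0 < T.length := by simp [hT]
  have key : T.reverse.rotate (q.length + 1) = w.reverse ++ p.reverse ++ (q.reverse ++ [c]) := by
    have e : T.reverse = (q.reverse ++ [c]) ++ (w.reverse ++ p.reverse) := by simp [hT]
    have e2 : q.length + 1 = (q.reverse ++ [c]).length := by simp
    rw [e, e2, List.rotate_append_length_eq]
  refine ⟨(q.length + 1) % T.length, Nat.mod_lt _ hpos, ?_⟩
  have e3 : T.reverse.rotate ((q.length + 1) % T.length) = T.reverse.rotate (q.length + 1) := by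
    have := List.rotate_mod T.reverse (q.length + 1)
    rwa [List.length_reverse] at this
  rw [e3, key]
  constructor
  · rw [List.append_assoc]; exact List.prefix_append _ _
  · simp

theorem aux_fwd {A : Type*} (T w : List A) (hne : T ≠ []) (c : A)
    (hw : T.getLast hne ∉ w) (k : ℕ) (hk : k < T.length)
    (h1 : w.reverse <+: T.reverse.rotate k) (h2 : (T.reverse.rotate k).getLast? = some c) :
    (w ++ [c]) <:+ T.take (if k = 0 then 1 else T.length - k + 1) := by
  obtain ⟨l, d, rfl⟩ : ∃ l d, T = l ++ [d] := ⟨_, _, (List.dropLast_append_getLast hne).symm⟩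
  simp only [List.getLast_append_singleton] at hw
  have hw' : d ∉ w.reverse := by simpa using hw
  by_cases h0 : k = 0
  · subst h0
    rw [List.rotate_zero] at h1 h2
    have hwn : w = [] := by
      cases hv : w.reverse with
      | nil => simpa using hv
      | cons e v =>
        rw [hv] at h1 hw'
        simp at h1 hw'
        exact absurd h1.1.symm hw'.1
    subst hwn
    rw [List.getLast?_reverse] at h2
    cases hT : l ++ [d] with
    | nil => simp at hT
    | cons e t =>
      rw [hT] at h2
      simp at h2
      simp [h2]
  · rw [if_neg h0]
    set W := (l ++ [d]).reverse with hW
    have hWl : W.length = (l ++ [d]).length := by simp [hW]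
    have hkW : k ≤ W.length := by omega
    rw [List.rotate_eq_drop_append_take hkW] at h1 h2
    have htd := List.take_append_drop k W
    have htl : (W.take k).length = k := by simp; omega
    generalize hb : W.drop k = b at *
    generalize ha : W.take k = a at *
    have han : a ≠ [] := by rintro rfl; simp at htl; omega
    have hda : ∃ a2, a = d :: a2 := by
      cases a with
      | nil => exact absurd rfl han
      | cons e a2 =>
        have : W = d :: l.reverse := by simp [hW]
        rw [this] at htd
        simp at htd
        exact ⟨a2, by rw [htd.1]⟩
    obtain ⟨a', c', rfl⟩ : ∃ l d, a = l ++ [d] := ⟨_, _, (List.dropLast_append_getLast han).symm⟩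
    have hc : c' = c := by simpa using h2
    subst hc
    have hvb : w.reverse <+: b := by
      rcases List.prefix_or_prefix_of_prefix h1 (List.prefix_append _ _) with h | ⟨t, ht⟩
      · exact h
      · cases t with
        | nil => simp at ht; rw [ht]
        | cons e t =>
          obtain ⟨a2, ha2⟩ := hda
          rw [ha2, ← ht, List.prefix_append_right_inj, List.cons_prefix_cons] at h1
          rw [← ht] at hw'
          simp [h1.1] at hw'
    obtain ⟨b', rfl⟩ := hvb
    have hT : l ++ [d] = (b'.reverse ++ (w ++ [c'])) ++ a'.reverse := by
      have : l ++ [d] = W.reverse := by simp [hW]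
      rw [this, ← htd]; simp
    have hl : (l ++ [d]).length - k + 1 = (b'.reverse ++ (w ++ [c'])).length := by
      rw [hT, ← htl]; simp; omega
    rw [hl, hT, List.take_left']
    · exact List.suffix_append _ _
    · rfl

theorem aux_notmem {A : Type*} [DecidableEq A] (T w : List A) (hne : T ≠ []) (c : A)
    (hlast : T.count (T.getLast hne) = 1) (h : (w ++ [c]) <:+: T) : T.getLast hne ∉ w := by
  obtain ⟨p, q, rfl⟩ := h
  intro hm
  have e : (p ++ (w ++ [c]) ++ q).getLast hne = (c :: q).getLast (by simp) := by
    have : p ++ (w ++ [c]) ++ q = (p ++ w) ++ (c :: q) := by simp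
    simp only [this]
    rw [List.getLast_append_of_ne_nil]
  have h2 : (p ++ (w ++ [c]) ++ q).getLast hne ∈ c :: q := by
    rw [e]; exact List.getLast_mem _
  generalize (p ++ (w ++ [c]) ++ q).getLast hne = d at *
  have c1 := List.count_pos_iff.2 hm
  have c2 := List.count_pos_iff.2 h2
  have : p ++ (w ++ [c]) ++ q = p ++ (w ++ (c :: q)) := by simp
  rw [this, List.count_append, List.count_append] at hlast
  omega

theorem aux_main {A : Type*} [LinearOrder A] (T : List A)
    (hne : T ≠ []) (hlast : T.count (T.getLast hne) = 1) :
    ∃ S : Finset ℕ, IsSuffixient T S ∧ S.card ≤ 2 * runsCount (BWT T.reverse) := by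
  set W := T.reverse with hW
  have hlen : 0 < T.length := List.length_pos_iff.2 hne
  have hmem : ∀ k, k ∈ sortedRotIdx W ↔ k < T.length := by
    intro k
    unfold sortedRotIdx
    rw [List.mem_insertionSort]
    simp [hW]
  have hsort : (sortedRotIdx W).Pairwise (fun a b => W.rotate a ≤ W.rotate b) := by
    unfold sortedRotIdx
    have : Std.Total (fun a b : ℕ => W.rotate a ≤ W.rotate b) := ⟨fun a b => le_total _ _⟩
    have : IsTrans ℕ (fun a b : ℕ => W.rotate a ≤ W.rotate b) := ⟨fun a b c => le_trans⟩
    exact List.pairwise_insertionSort _ _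
  set f : ℕ → Option A := fun k => (W.rotate k).getLast? with hf
  have hB : BWT W = (sortedRotIdx W).map f := rfl
  rw [hB]
  generalize sortedRotIdx W = L at *
  obtain ⟨S, hS1, hS2, hS3⟩ : ∃ S : Finset ℕ, S.card ≤ 2 * runsCount (L.map f) ∧
      (∀ x ∈ S, x ∈ L) ∧ ∀ x y, [x, y] <:+: L → f x ≠ f y → x ∈ S ∧ y ∈ S := by
    cases L with
    | nil => have := (hmem 0).2 hlen; simp at this
    | cons a l =>
      obtain ⟨S, h1, h2, h3⟩ := aux_runs f l a
      refine ⟨S, ?_, h2, h3⟩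
      unfold runsCount
      rw [List.map_cons, List.destutter_cons']
      omega
  refine ⟨S.image (fun k => if k = 0 then 1 else T.length - k + 1), ⟨?_, ?_⟩,
    Finset.card_image_le.trans hS1⟩
  · intro s hs
    obtain ⟨k, hk, rfl⟩ := Finset.mem_image.1 hs
    have := (hmem k).1 (hS2 k hk)
    split <;> omega
  · intro w c hr hc
    obtain ⟨c', hcc, hc'⟩ : ∃ c', c' ≠ c ∧ (w ++ [c']) <:+: T := by
      obtain ⟨c1, c2, h12, h1, h2⟩ := hr
      by_cases h : c1 = c
      · exact ⟨c2, fun h' => h12 (h.trans h'.symm), h2⟩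
      · exact ⟨c1, h, h1⟩
    obtain ⟨x, hx, px, fx⟩ := aux_back T w c hc
    obtain ⟨z, hz, pz, fz⟩ := aux_back T w c' hc'
    obtain ⟨u, v, pu, pv, huv, gu, gv⟩ := aux_cross (fun a b => W.rotate a ≤ W.rotate b)
      (fun k => w.reverse <+: W.rotate k) (fun k => f k = some c)
      (fun x y z h1 h2 h3 h4 => aux_convex _ _ _ _ h1 h2 h3 h4) (fun _ => le_rfl) L hsort
      x ((hmem x).2 hx) z ((hmem z).2 hz) px pz fx
      (by
        intro h
        have h' : some c' = some c := fz.symm.trans h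
        exact hcc (Option.some.inj h'))
    have hne' : f u ≠ f v := fun h => gv (h.symm.trans gu)
    have huS : u ∈ S := by
      rcases huv with h | h
      · exact (hS3 _ _ h hne').1
      · exact (hS3 _ _ h hne'.symm).2
    exact ⟨_, Finset.mem_image_of_mem _ huS,
      aux_fwd T w hne c (aux_notmem T w hne c hlast hc) u ((hmem u).1 (hS2 u huS)) pu gu⟩


/-- There is a suffixient set for `T` of cardinality at most `2·r̄`, where `r̄` is the
number of runs of `BWT(reverse T)`; equivalently `χ ≤ 2·r̄` where `χ` is the minimum
cardinality of a suffixient set for `T`. -/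
theorem exists_suffixient_le_two_rbar {A : Type*} [LinearOrder A] (T : List A)
    (hne : T ≠ []) (hn : 2 ≤ T.length)
    (hlast : T.count (T.getLast hne) = 1) :
    (∃ S : Finset ℕ, IsSuffixient T S ∧ S.card ≤ 2 * runsCount (BWT T.reverse)) ∧
    sInf {k : ℕ | ∃ S : Finset ℕ, IsSuffixient T S ∧ S.card = k} ≤
      2 * runsCount (BWT T.reverse) := by
  obtain ⟨S, h1, h2⟩ := aux_main T hne hlast
  exact ⟨⟨S, h1, h2⟩, le_trans (Nat.sInf_le (m := S.card) ⟨S, h1, rfl⟩) h2⟩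
end

section
/- Let T be a string of length n ≥ 2 over an alphabet Σ whose last character occurs exactly once in T (so T contains at least two distinct characters and the empty string is right-maximal in T). Let w be a nonempty string that occurs in T, let α be the longest proper prefix of w that is right-maximal in T (α exists, since the empty string is a right-maximal proper prefix of w), and let c be the character of w at position |α|+1. Then every occurrence of α·c in T extends to an occurrence of w: for every position i with T[i..i+|α|] = α·c, we have i + |w| − 1 ≤ n and T[i..i+|w|−1] = w. -/
/-- Let `w` be a nonempty string occurring in `T`, let `a` be the longest proper prefix
of `w` that is right-maximal in `T`, and let `c` be the character of `w` at position
`|a|+1` (so `a·c` is a prefix of `w`).  Then every occurrence of `a·c` in `T` extends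
to an occurrence of `w`: if `T[i..i+|a|] = a·c` (1-based position `i`), then
`i + |w| − 1 ≤ n` and `T[i..i+|w|−1] = w`. -/
theorem occurrence_extends {A : Type*} [DecidableEq A] (T : List A)
    (hne : T ≠ []) (hn : 2 ≤ T.length)
    (hlast : T.count (T.getLast hne) = 1)
    (w : List A) (hw : w ≠ []) (hwocc : w <:+: T)
    (a : List A) (c : A)
    (hac : a ++ [c] <+: w)
    (hrm : RightMaximal T a)
    (hmax : ∀ b : List A, b <+: w → b.length < w.length → RightMaximal T b →
      b.length ≤ a.length)
    (i : ℕ) (hi : 1 ≤ i)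
    (hocc : (T.drop (i - 1)).take (a.length + 1) = a ++ [c]) :
    i + w.length - 1 ≤ T.length ∧ (T.drop (i - 1)).take w.length = w := by
  set D := T.drop (i - 1) with hD
  have hDs : D <:+ T := List.drop_suffix _ _
  have hmain : ∀ k, a.length + 1 ≤ k → k ≤ w.length → w.take k <+: D := by
    intro k hk
    induction k, hk using Nat.le_induction with
    | base =>
      intro _
      have h := List.prefix_iff_eq_take.mp hac
      simp only [List.length_append, List.length_singleton] at h
      rw [← h, ← hocc]
      exact List.take_prefix _ _
    | succ k hk ih =>
      intro hkw
      have hkw' : k < w.length := hkw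
      obtain ⟨r, hr⟩ := ih hkw'.le
      have htake : w.take (k + 1) = w.take k ++ [w[k]] := (List.take_append_getElem hkw').symm
      have hlen : (w.take k).length = k := by simp; omega
      have hpx : w.take k ++ [w[k]] <:+: T := by
        rw [← htake]
        exact (List.take_prefix _ _).isInfix.trans hwocc
      have hpne : w.take k ≠ [] := by
        intro h
        rw [h] at hlen
        simp at hlen
        omega
      cases r with
      | nil =>
        exfalso
        rw [List.append_nil] at hr
        rw [← hr] at hDs
        have hmem : T.getLast hne ∈ w.take k := by
          rw [← hDs.getLast hpne]
          exact List.getLast_mem _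
        obtain ⟨s, t, hst⟩ := hpx
        have hT : T = (s ++ w.take k) ++ (w[k] :: t) := by
          rw [← hst]; simp only [List.append_assoc, List.singleton_append]
        have h2 : T.getLast hne ∈ w[k] :: t := by
          have hsuf : (w[k] :: t) <:+ T := ⟨_, hT.symm⟩
          rw [← hsuf.getLast (by simp)]
          exact List.getLast_mem _
        generalize T.getLast hne = l at *
        rw [hT, List.count_append, List.count_append] at hlast
        have h3 := List.count_pos_iff.mpr hmem
        have h4 := List.count_pos_iff.mpr h2
        omega
      | cons y r =>
        by_cases hxy : w[k] = y
        · rw [htake, hxy, ← hr]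
          exact ⟨r, by simp⟩
        · exfalso
          have hy : w.take k ++ [y] <:+: T := by
            refine List.IsInfix.trans ?_ hDs.isInfix
            rw [← hr]
            exact ⟨[], r, by simp⟩
          have := hmax (w.take k) (List.take_prefix _ _) (by omega) ⟨_, _, hxy, hpx, hy⟩
          omega
  have hacl := hac.length_le
  simp only [List.length_append, List.length_singleton] at hacl
  have hfin := hmain w.length hacl le_rfl
  rw [List.take_length] at hfin
  have hl := hfin.length_le
  have hDl : D.length = T.length - (i - 1) := by simp [hD]
  exact ⟨by omega, (List.prefix_iff_eq_take.mp hfin).symm⟩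
end

section
/- Let T be a string of length n ≥ 2 over an alphabet Σ whose last character occurs exactly once in T. Let c be a character occurring in T and let x be a string occurring in T such that x·c does not occur in T. Let y be the longest suffix of x such that y·c occurs in T (y exists and is a proper suffix of x, possibly empty, since the empty string satisfies the condition). Then y is right-maximal in T. -/
/-- Let `c` be a character occurring in `T` and `x` a string occurring in `T` such that
`x·c` does not occur in `T`.  If `y` is the longest suffix of `x` such that `y·c`
occurs in `T` (such a `y` exists and is a proper suffix of `x`, possibly empty, since
the empty string satisfies the condition), then `y` is right-maximal in `T`. -/
theorem longest_extendable_suffix_rightMaximal {A : Type*} [DecidableEq A] (T : List A)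
    (hne : T ≠ []) (hn : 2 ≤ T.length)
    (hlast : T.count (T.getLast hne) = 1)
    (c : A) (hc : [c] <:+: T)
    (x : List A) (hx : x <:+: T) (hxc : ¬ (x ++ [c]) <:+: T)
    (y : List A) (hyx : y <:+ x) (hyc : (y ++ [c]) <:+: T)
    (hymax : ∀ z : List A, z <:+ x → (z ++ [c]) <:+: T → z.length ≤ y.length) :
    RightMaximal T y := by
  obtain ⟨s, t, hT⟩ := hx
  obtain ⟨u, hu⟩ := hyx
  cases t with
  | cons d t =>
    refine ⟨c, d, ?_, hyc, s ++ u, t, ?_⟩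
    · rintro rfl
      exact hxc ⟨s, t, by simp [← hT]⟩
    · simp [← hT, ← hu]
  | nil =>
    rcases List.eq_nil_or_concat y with hy | ⟨y', l, hy⟩
    · subst hy
      have hsplit := List.dropLast_append_getLast hne
      generalize T.getLast hne = l at hlast hsplit
      generalize T.dropLast = D at hsplit
      subst hsplit
      cases D with
      | nil => simp at hn
      | cons a D =>
        have hal : a ≠ l := by
          rintro rfl
          simp at hlast
        exact ⟨a, l, hal, ⟨[], D ++ [l], by simp⟩, ⟨a :: D, [], by simp⟩⟩
    · exfalso
      have hl : T.getLast hne = l := by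
        have h2 : T = (s ++ u ++ y') ++ [l] := by simp [← hT, ← hu, hy]
        simp [h2]
      rw [hl] at hlast
      obtain ⟨s', t', h3⟩ := hyc
      have h4 : T = (s' ++ y' ++ [l]) ++ (c :: t') := by simp [← h3, hy]
      have h5 : l ∈ c :: t' := by
        have h6 : (c :: t').getLast (by simp) = l := by
          rw [← hl]
          simp [h4]
        rw [← h6]
        exact List.getLast_mem _
      have h7 := List.count_pos_iff.mpr h5
      rw [h4, List.count_append, List.count_append, List.count_singleton_self] at hlast
      omega
end

section
/- Let T be a string of length n ≥ 2 over an alphabet Σ whose last character occurs exactly once in T, let S be a suffixient set for T, and let P[1..m] (m ≥ 1) be a pattern every character of which occurs in T. Run the MEM-finding algorithm on P, T and S. Then every time control reaches the top of the while-loop with i ≤ m, the following three invariants hold: (1) every MEM P[i′..j′] of P with respect to T with j′ ≤ i − 2 has already been reported; (2) ℓ equals the length of the longest suffix of P[1..i−1] that occurs as a substring of T; and (3) the longest suffix β of P[1..i] that occurs as a substring of T is nonempty, and the string obtained from β by removing its last character is either empty or right-maximal in T. -/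
/-- `LCP(x, y)`: the length of the longest common prefix of `x` and `y`. -/
def lcp {A : Type*} [DecidableEq A] : List A → List A → ℕ
  | a :: x, b :: y => if a = b then lcp x y + 1 else 0
  | _, _ => 0

/-- `LCS(x, y)`: the length of the longest common suffix of `x` and `y`. -/
def lcs {A : Type*} [DecidableEq A] (x y : List A) : ℕ := lcp x.reverse y.reverse

/-- The length of the longest suffix of `x` that occurs (as a substring) in `T`. -/
def maxSufLen {A : Type*} [DecidableEq A] (x T : List A) : ℕ :=
  Nat.findGreatest (fun k => x.drop (x.length - k) <:+: T) x.length

/-- The longest suffix of `x` that occurs (as a substring) in `T`. -/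
def longestSufOcc {A : Type*} [DecidableEq A] (x T : List A) : List A :=
  x.drop (x.length - maxSufLen x T)

/-- `P[i..j]` (1-based, `1 ≤ i ≤ j ≤ m`) is a maximal exact match (MEM) of `P` with
respect to `T`: it occurs in `T`, it cannot be extended to the left
(`i = 1` or `P[i−1..j]` does not occur in `T`), and it cannot be extended to the right
(`j = m` or `P[i..j+1]` does not occur in `T`). -/
def IsMEM {A : Type*} (T P : List A) (i j : ℕ) : Prop :=
  1 ≤ i ∧ i ≤ j ∧ j ≤ P.length ∧
  Substr P i j <:+: T ∧
  (i = 1 ∨ ¬ Substr P (i - 1) j <:+: T) ∧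
  (j = P.length ∨ ¬ Substr P i (j + 1) <:+: T)

/-- `Reach T P S i ℓ R` holds iff some partial run of the MEM-finding algorithm on
pattern `P`, text `T` and suffixient set `S` reaches the top of the while-loop with
current position `i`, current length `ℓ`, and list `R` of pairs reported so far
(in order, allowing any choice, at each earlier iteration, of an element `j ∈ S`
maximizing `LCS(P[1..i], T[1..s])` over `s ∈ S`). -/
inductive Reach {A : Type*} [DecidableEq A] (T P : List A) (S : Finset ℕ) :
    ℕ → ℕ → List (ℕ × ℕ) → Prop
  | init : Reach T P S 1 0 []
  | step (i ℓ : ℕ) (R : List (ℕ × ℕ)) (j : ℕ) :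
      Reach T P S i ℓ R →
      i ≤ P.length →
      j ∈ S →
      (∀ s ∈ S, lcs (P.take i) (T.take s) ≤ lcs (P.take i) (T.take j)) →
      Reach T P S
        (i + lcp (P.drop i) (T.drop j) + 1)
        (lcs (P.take i) (T.take j) + lcp (P.drop i) (T.drop j))
        (if lcs (P.take i) (T.take j) ≤ ℓ then R ++ [(i - ℓ, i - 1)] else R)

theorem lcp_spec {A : Type*} [DecidableEq A] (x y : List A) :
    lcp x y ≤ x.length ∧ lcp x y ≤ y.length ∧ x.take (lcp x y) = y.take (lcp x y) := by
  induction x generalizing y with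
  | nil => simp [lcp]
  | cons a x ih =>
    cases y with
    | nil => simp [lcp]
    | cons b y =>
      by_cases h : a = b
      · have := ih y
        simp [lcp, h, this]
      · simp [lcp, h]

theorem lcp_ge {A : Type*} [DecidableEq A] (z x y : List A) (hx : z <+: x) (hy : z <+: y) :
    z.length ≤ lcp x y := by
  obtain ⟨u, rfl⟩ := hx
  obtain ⟨v, rfl⟩ := hy
  induction z with
  | nil => simp
  | cons a z ih => simpa [lcp] using ih

theorem lcp_mismatch {A : Type*} [DecidableEq A] (x y : List A)
    (hx : lcp x y < x.length) (hy : lcp x y < y.length) :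
    x[lcp x y] ≠ y[lcp x y] := by
  intro he
  have h := lcp_spec x y
  have h1 : x.take (lcp x y + 1) = y.take (lcp x y + 1) := by
    rw [← List.take_concat_get' _ _ hx, ← List.take_concat_get' _ _ hy, h.2.2, he]
  have := lcp_ge (x.take (lcp x y + 1)) x y (List.take_prefix _ _)
    (h1 ▸ List.take_prefix _ _)
  rw [List.length_take] at this
  omega

theorem lcs_spec {A : Type*} [DecidableEq A] (x y : List A) :
    lcs x y ≤ x.length ∧ lcs x y ≤ y.length ∧
      x.drop (x.length - lcs x y) = y.drop (y.length - lcs x y) := by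
  have h := lcp_spec x.reverse y.reverse
  simp only [List.length_reverse] at h
  refine ⟨h.1, h.2.1, ?_⟩
  have h3 := h.2.2
  rw [List.take_reverse, List.take_reverse] at h3
  exact List.reverse_injective h3

theorem lcs_ge {A : Type*} [DecidableEq A] (z x y : List A) (hx : z <:+ x) (hy : z <:+ y) :
    z.length ≤ lcs x y := by
  have := lcp_ge z.reverse x.reverse y.reverse (List.reverse_prefix.2 hx)
    (List.reverse_prefix.2 hy)
  simpa [lcs] using this

theorem maxSufLen_spec {A : Type*} [DecidableEq A] (x T : List A) :
    maxSufLen x T ≤ x.length ∧ x.drop (x.length - maxSufLen x T) <:+: T := by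
  refine ⟨Nat.findGreatest_le _, ?_⟩
  have := Nat.findGreatest_spec (P := fun k => x.drop (x.length - k) <:+: T) (m := 0)
    (n := x.length) (Nat.zero_le _) (by simp)
  exact this

theorem maxSufLen_ge {A : Type*} [DecidableEq A] (x T : List A) (k : ℕ) (hk : k ≤ x.length)
    (h : x.drop (x.length - k) <:+: T) : k ≤ maxSufLen x T :=
  Nat.le_findGreatest hk h

theorem occ_mono {A : Type*} (P : List A) {a a' b b' : ℕ} (ha : a ≤ a') (hb : b' ≤ b) :
    (P.take b').drop a' <:+: (P.take b).drop a := by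
  have h1 : (P.take b').drop a' <:+ (P.take b').drop a := by
    have : (P.take b').drop a' = ((P.take b').drop a).drop (a' - a) := by
      rw [List.drop_drop]; congr 1; omega
    rw [this]; exact List.drop_suffix _ _
  have h2 : (P.take b').drop a <+: (P.take b).drop a := by
    have : P.take b' = (P.take b).take b' := by rw [List.take_take]; congr 1; omega
    rw [this]; exact (List.take_prefix _ _).drop _
  exact h1.isInfix.trans h2.isInfix

theorem take_add_drop {A : Type*} (P : List A) {a i f : ℕ} (ha : a ≤ i) (hi : i ≤ P.length) :
    (P.take (i + f)).drop a = (P.take i).drop a ++ (P.drop i).take f := by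
  rw [List.take_add, List.drop_append_of_le_length]
  simp; omega

theorem take_succ_drop {A : Type*} (P : List A) {a i : ℕ} (ha : a ≤ i) (hi : i < P.length) :
    (P.take (i + 1)).drop a = (P.take i).drop a ++ [P[i]] := by
  rw [← List.take_concat_get' _ _ hi, List.drop_append_of_le_length]
  simp; omega

theorem last_unique {A : Type*} [DecidableEq A] (T : List A) (hne : T ≠ [])
    (hlast : T.count (T.getLast hne) = 1) (w : List A) (c : A) (hw : w ≠ [])
    (h1 : w <:+ T) (h2 : w ++ [c] <:+: T) : False := by
  have hl : w.getLast hw = T.getLast hne := h1.getLast hw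
  obtain ⟨s, t, h2⟩ := h2
  have e : T = (s ++ w) ++ (c :: t) := by rw [← h2]; simp
  have m1 : T.getLast hne ∈ s ++ w := by
    rw [← hl]; exact List.mem_append_right _ (List.getLast_mem hw)
  have m2 : T.getLast hne ∈ c :: t := by
    have : T.getLast hne = (c :: t).getLast (by simp) := by
      subst e; simp
    rw [this]; exact List.getLast_mem _
  have := List.count_pos_iff.2 m1
  have := List.count_pos_iff.2 m2
  have e2 : T.count (T.getLast hne) = (s ++ w).count (T.getLast hne)
      + (c :: t).count (T.getLast hne) := by
    rw [← List.count_append, ← e]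
  omega

theorem nil_rightMaximal {A : Type*} [DecidableEq A] (T : List A)
    (hne : T ≠ []) (hn : 2 ≤ T.length)
    (hlast : T.count (T.getLast hne) = 1) : RightMaximal T [] := by
  have h0 : 0 < T.length := by omega
  refine ⟨T[0], T.getLast hne, ?_, ?_, ?_⟩
  · intro h
    refine last_unique T hne hlast [T.getLast hne] T[1] (by simp) ?_ ?_
    · exact ⟨T.dropLast, List.dropLast_append_getLast hne⟩
    · rw [← h]
      match T, hn with
      | a :: b :: t, _ => exact ⟨[], t, by simp⟩
  · simpa using List.infix_iff_prefix_suffix.2 ⟨T, by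
      match T, hne with
      | a :: t, _ => exact ⟨t, by simp⟩, List.suffix_rfl⟩
  · have : [T.getLast hne] <:+ T := ⟨T.dropLast, List.dropLast_append_getLast hne⟩
    simpa using this.isInfix

/-- Specification of `maxSufLen` on prefixes of `P`. -/
theorem msl_spec {A : Type*} [DecidableEq A] (P T : List A) (i : ℕ) (hi : i ≤ P.length) :
    maxSufLen (P.take i) T ≤ i ∧ (P.take i).drop (i - maxSufLen (P.take i) T) <:+: T ∧
    longestSufOcc (P.take i) T = (P.take i).drop (i - maxSufLen (P.take i) T) ∧
    ∀ a ≤ i, (P.take i).drop a <:+: T → i - a ≤ maxSufLen (P.take i) T := by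
  have h := maxSufLen_spec (P.take i) T
  have hl : (P.take i).length = i := by simp [hi]
  unfold longestSufOcc
  rw [hl] at h ⊢
  refine ⟨h.1, h.2, rfl, fun a ha ho => maxSufLen_ge _ _ _ (by omega) ?_⟩
  rw [hl]
  rwa [show i - (i - a) = a by omega]

theorem step_core {A : Type*} [DecidableEq A] (T : List A)
    (hne : T ≠ []) (hn : 2 ≤ T.length)
    (hlast : T.count (T.getLast hne) = 1)
    (S : Finset ℕ) (hS : IsSuffixient T S)
    (P : List A) (i j : ℕ) (hi : i ≤ P.length)
    (hj : j ∈ S)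
    (hmax : ∀ s ∈ S, lcs (P.take i) (T.take s) ≤ lcs (P.take i) (T.take j))
    (h3 : longestSufOcc (P.take i) T ≠ [])
    (h4 : (longestSufOcc (P.take i) T).dropLast = [] ∨
        RightMaximal T ((longestSufOcc (P.take i) T).dropLast)) :
    lcs (P.take i) (T.take j) = maxSufLen (P.take i) T := by
  obtain ⟨s1, s2, s3, s4⟩ := msl_spec P T i hi
  have hl : (P.take i).length = i := by simp [hi]
  have hspec := lcs_spec (P.take i) (T.take j)
  rw [hl] at hspec
  apply le_antisymm
  · have := s4 (i - lcs (P.take i) (T.take j)) (by omega) (by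
      rw [hspec.2.2]
      exact (List.drop_suffix _ _).isInfix.trans (List.take_prefix _ _).isInfix)
    omega
  · have hrm : RightMaximal T ((longestSufOcc (P.take i) T).dropLast) := by
      rcases h4 with h4 | h4
      · rw [h4]; exact nil_rightMaximal T hne hn hlast
      · exact h4
    have hin : longestSufOcc (P.take i) T <:+: T := by rw [s3]; exact s2
    obtain ⟨s, hs, hsuf⟩ := hS.2 _ ((longestSufOcc (P.take i) T).getLast h3) hrm (by
      rw [List.dropLast_append_getLast]; exact hin)
    rw [List.dropLast_append_getLast] at hsuf
    have h5 := lcs_ge _ (P.take i) (T.take s) (by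
      rw [s3]; exact List.drop_suffix _ _) hsuf
    have h6 : (longestSufOcc (P.take i) T).length = maxSufLen (P.take i) T := by
      rw [s3, List.length_drop, hl]; omega
    have := hmax s hs
    omega

/-- The loop invariants of the MEM-finding algorithm: whenever control reaches the top
of the while-loop with `i ≤ m`, (1) every MEM `P[i'..j']` with `j' ≤ i − 2` has already
been reported; (2) `ℓ` is the length of the longest suffix of `P[1..i−1]` occurring in
`T`; and (3) the longest suffix `β` of `P[1..i]` occurring in `T` is nonempty, and `β`
minus its last character is either empty or right-maximal in `T`. -/
theorem mem_loop_invariants {A : Type*} [DecidableEq A] (T : List A)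
    (hne : T ≠ []) (hn : 2 ≤ T.length)
    (hlast : T.count (T.getLast hne) = 1)
    (S : Finset ℕ) (hS : IsSuffixient T S)
    (P : List A) (hm : 1 ≤ P.length) (hP : ∀ c ∈ P, [c] <:+: T)
    (i ℓ : ℕ) (R : List (ℕ × ℕ))
    (hreach : Reach T P S i ℓ R) (hi : i ≤ P.length) :
    (∀ i' j', IsMEM T P i' j' → j' + 2 ≤ i → (i', j') ∈ R) ∧
    ℓ = maxSufLen (P.take (i - 1)) T ∧
    (longestSufOcc (P.take i) T ≠ [] ∧
      ((longestSufOcc (P.take i) T).dropLast = [] ∨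
        RightMaximal T ((longestSufOcc (P.take i) T).dropLast))) := by
  clear hm
  induction hreach with
  | init =>
    obtain ⟨s1, s2, s3, s4⟩ := msl_spec P T 1 hi
    have h0 : (P.take 1).drop 0 <:+: T := by
      match P, hi, hP with
      | a :: t, _, hP => simpa using hP a (by simp)
    have h1 := s4 0 (by omega) h0
    refine ⟨fun i' j' _ h => by omega, by simp [maxSufLen], ?_, Or.inl ?_⟩
    · rw [s3]
      apply List.ne_nil_of_length_pos
      simp; omega
    · apply List.eq_nil_of_length_eq_zero
      rw [s3]; simp [hi]
  | step i ℓ R j hr hi' hj hmax ih =>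
    obtain ⟨ih1, ih2, ih3, ih4⟩ := ih hi'
    have hb := step_core T hne hn hlast S hS P i j hi' hj hmax ih3 ih4
    have hjl := (hS.1 j hj).2
    have hspec := lcs_spec (P.take i) (T.take j)
    have hpl := lcp_spec (P.drop i) (T.drop j)
    have hmis := lcp_mismatch (P.drop i) (T.drop j)
    generalize lcs (P.take i) (T.take j) = b at *
    generalize lcp (P.drop i) (T.drop j) = f at *
    have hlP : (P.take i).length = i := by simp [hi']
    have hlT : (T.take j).length = j := by simp [hjl]
    rw [hlP, hlT] at hspec
    obtain ⟨hbi, hbj, hbe⟩ := hspec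
    obtain ⟨hf1, hf2, hfe⟩ := hpl
    rw [List.length_drop] at hf1 hf2
    obtain ⟨s1, s2, s3, s4⟩ := msl_spec P T i hi'
    rw [← hb] at s1 s2 s3 s4
    have hW : (P.take (i + f)).drop (i - b) = (T.take (j + f)).drop (j - b) := by
      rw [take_add_drop P (by omega) hi', take_add_drop T (by omega) hjl, hbe, hfe]
    have hWocc : (P.take (i + f)).drop (i - b) <:+: T := by
      rw [hW]
      exact (List.drop_suffix _ _).isInfix.trans (List.take_prefix _ _).isInfix
    have hext : ∀ a e, i ≤ e → a ≤ i → (P.take e).drop a <:+: T → i - b ≤ a := by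
      intro a e he ha ho
      have := s4 a ha ((occ_mono P le_rfl he).trans ho)
      omega
    refine ⟨?_, ?_, ?_⟩
    · rintro i' j' ⟨m1, m2, m3, m4, m5, m6⟩ hle
      unfold Substr at m4 m5 m6
      rcases Nat.lt_or_ge (j' + 1) i with hlt | hge
      · have := ih1 i' j' ⟨m1, m2, m3, m4, m5, m6⟩ (by omega)
        split_ifs
        · exact List.mem_append_left _ this
        · exact this
      rcases Nat.eq_or_lt_of_le hge with heq | hlt
      · subst heq
        obtain ⟨t1, t2, t3, t4⟩ := msl_spec P T j' m3
        rw [Nat.add_sub_cancel] at ih2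
        rw [← ih2] at t1 t2 t3 t4
        have q1 := t4 (i' - 1) (by omega) m4
        have q2 : ℓ ≤ j' - (i' - 1) := by
          by_contra hcon
          rcases m5 with m5 | m5
          · omega
          · exact m5 ((occ_mono P (by omega) le_rfl).trans t2)
        have q3 : b ≤ ℓ := by
          by_contra hcon
          rcases m6 with m6 | m6
          · omega
          · exact m6 ((occ_mono P (by omega) le_rfl).trans s2)
        rw [if_pos q3]
        apply List.mem_append_right
        simp; omega
      · exfalso
        have q2 : i' - 1 ≤ i - b := by
          by_contra hcon
          rcases m5 with m5 | m5
          · omega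
          · exact m5 ((occ_mono P (by omega) (by omega)).trans hWocc)
        have q1 := hext (i' - 1) j' (by omega) (by omega) m4
        rcases m6 with m6 | m6
        · omega
        · exact m6 ((occ_mono P (by omega) (by omega)).trans hWocc)
    · rw [Nat.add_sub_cancel]
      obtain ⟨t1, t2, t3, t4⟩ := msl_spec P T (i + f) (by omega)
      have q1 := t4 (i - b) (by omega) hWocc
      apply le_antisymm
      · omega
      · by_contra hcon
        have := hext _ (i + f) (by omega) (by omega) t2
        omega
    · obtain ⟨t1, t2, t3, t4⟩ := msl_spec P T (i + f + 1) hi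
      have hlt : i + f < P.length := by omega
      have hc : (P.take (i + f + 1)).drop (i + f) <:+: T := by
        rw [take_succ_drop P le_rfl hlt]
        simpa using hP _ (List.getElem_mem hlt)
      have q1 := t4 (i + f) (by omega) hc
      generalize maxSufLen (P.take (i + f + 1)) T = k at *
      rw [t3]
      rw [take_succ_drop P (by omega) hlt] at t2 ⊢
      refine ⟨by simp, ?_⟩
      rw [List.dropLast_concat]
      have hk : i - b ≤ i + f + 1 - k := by
        by_contra hcon
        have := hext _ (i + f) (by omega) (by omega) ((List.prefix_append _ _).isInfix.trans t2)
        omega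
      have hsuf : (P.take (i + f)).drop (i + f + 1 - k) <:+ T.take (j + f) := by
        have e : (P.take (i + f)).drop (i + f + 1 - k)
            = ((P.take (i + f)).drop (i - b)).drop (i + f + 1 - k - (i - b)) := by
          rw [List.drop_drop]; congr 1; omega
        rw [e, hW]
        exact (List.drop_suffix _ _).trans (List.drop_suffix _ _)
      rcases Nat.lt_or_ge (j + f) T.length with hjf | hjf
      · right
        refine ⟨P[i + f], T[j + f], ?_, t2, ?_⟩
        · have := hmis (by simp; omega) (by simp; omega)
          simpa using this
        · obtain ⟨u, hu⟩ := hsuf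
          have : (P.take (i + f)).drop (i + f + 1 - k) ++ [T[j + f]] <:+ T.take (j + f + 1) := by
            refine ⟨u, ?_⟩
            rw [← List.append_assoc, hu, List.take_concat_get']
          exact this.isInfix.trans (List.take_prefix _ _).isInfix
      · left
        rw [List.take_of_length_le hjf] at hsuf
        by_contra hcon
        exact last_unique T hne hlast _ _ hcon hsuf t2
end
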